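/- Let d ≥ 2 and let H = F_2[T, X_2, …, X_d]/(X_i² − T·X_i : 2 ≤ i ≤ d), with H_1 the F_2-span of the images t, α_2, …, α_d of the variables. Then H is universally Koszul: for every ideal I of H generated by a subset of H_1 and every x ∈ H_1 with x ∉ I, the colon ideal I : x = { h ∈ H : h·x ∈ I } is again generated by a subset of H_1. -/

import Mathlib

open MvPolynomial

/-- The colon ideal `I : x = {a | a * x ∈ I}`. -/
def colonIdeal {A : Type*} [Ring A] (I : Ideal A) (x : A) : Ideal A :=
  Submodule.comap (LinearMap.toSpanSingleton A A x) I

/-- The defining relations `X_i² − T·X_i` (with `T = X 0`) of the cohomology of a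
superpythagorean field. -/
noncomputable def spRel (d : ℕ) [NeZero d] : Ideal (MvPolynomial (Fin d) (ZMod 2)) :=
  Ideal.span {p | ∃ i : Fin d, i ≠ 0 ∧ p = X i ^ 2 - X 0 * X i}

/-- The algebra `H = F₂[T, X₂, …, X_d]/(X_i² − T·X_i)`. -/
abbrev SPH (d : ℕ) [NeZero d] := MvPolynomial (Fin d) (ZMod 2) ⧸ spRel d

/-- The images `t = gen d 0`, `α_i = gen d i` of the variables in `H`. -/
noncomputable def gen (d : ℕ) [NeZero d] (i : Fin d) : SPH d :=
  Ideal.Quotient.mk (spRel d) (X i)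

/-- The degree-one component `H_1`, the `F₂`-span of `{t, α₂, …, α_d}`. -/
noncomputable def H1 (d : ℕ) [NeZero d] : Submodule (ZMod 2) (SPH d) :=
  Submodule.span (ZMod 2) (Set.range (gen d))

/-!
Write `t` for the image of `T`. Every `x ∈ H_1` satisfies `x² = t x`, so `x (x + t) = 0`, and in
fact `(S) : x = (S, x + t)` whenever `S ⊆ H_1` and `x ∈ H_1` is not in the span of `S`.

If `x` is not even in the span of `S` and `t`, choose a functional `φ` with `φ x = 1` vanishing on
`S` and `t`. The substitution `y ↦ y + φ y ω` into `H[ω]/(ω² - t ω)` has the form `f ↦ f + D f ω`,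
where `D (f g) = D f g + f D g + t D f D g`. Such a `D` preserves the ideal `(S)`, and `h x ∈ (S)`
gives `D (h x) = h + D h (x + t) ∈ (S)`.

Otherwise `x + t` is in the span of `S`, while `t` is not, and one has to see that `t` is regular
modulo `(S)`. A linear projection fixing `t` with kernel the span of `S` extends to an algebra
retraction of `H` that kills `S` and is the identity modulo `(S)`. This reduces the claim to the
regularity of `t` in `H` itself. This follows by adjoining the generators to `F_2[t]` one at a time:
the operator `D` along `α_i` kills the previous generators, so it extracts `b` from `a + b α_i`.
-/

theorem two_eq_zero_of_algebra_zmod_two (A : Type*) [Ring A] [Algebra (ZMod 2) A] :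
    (2 : A) = 0 := by
  rw [← one_add_one_eq_two, ZModModule.add_self]

theorem mul_self_eq_mul_of_mem_span {A : Type*} [CommRing A] [Algebra (ZMod 2) A] {s : Set A}
    {t x : A} (hs : ∀ y ∈ s, y * y = t * y) (hx : x ∈ Submodule.span (ZMod 2) s) :
    x * x = t * x := by
  induction hx using Submodule.span_induction with
  | mem y hy => exact hs y hy
  | zero => simp only [mul_zero]
  | add y z _ _ hy hz =>
    linear_combination hy + hz + y * z * two_eq_zero_of_algebra_zmod_two A
  | smul c y _ hy =>
    have hc : c * c = c := by decide +revert
    rw [smul_mul_smul_comm, hc, hy, mul_smul_comm]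

theorem mem_or_add_mem_of_mem_span_insert {M : Type*} [AddCommGroup M] [Module (ZMod 2) M]
    {s : Set M} {x t : M} (hx : x ∈ Submodule.span (ZMod 2) (insert t s)) :
    x ∈ Submodule.span (ZMod 2) s ∨ x + t ∈ Submodule.span (ZMod 2) s := by
  obtain ⟨c, z, hz, rfl⟩ := Submodule.mem_span_insert.1 hx
  obtain rfl | hc := eq_or_ne c 0
  · left
    simpa only [zero_smul, zero_add] using hz
  · right
    have hc1 : c = 1 := Fin.eq_one_of_ne_zero c hc
    rwa [hc1, one_smul, add_right_comm, ZModModule.add_self, zero_add]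

theorem exists_linearMap_sub_mem_of_notMem {K V : Type*} [DivisionRing K] [AddCommGroup V]
    [Module K V] {W : Submodule K V} {t : V} (ht : t ∉ W) :
    ∃ π : V →ₗ[K] V, π t = t ∧ (∀ w ∈ W, π w = 0) ∧ ∀ v, v - π v ∈ W := by
  have ht0 : t ≠ 0 := fun h ↦ ht (h.symm ▸ zero_mem W)
  have hdisj : Disjoint (Submodule.span K {t}) W :=
    ((Submodule.disjoint_span_singleton' ht0).2 ht).symm
  obtain ⟨U, htU, hU⟩ := hdisj.exists_isCompl
  refine ⟨U.projection W hU, ?_, fun w hw ↦ ?_, Submodule.sub_projection_mem hU⟩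
  · exact Submodule.projection_apply_of_mem_left hU (htU (Submodule.mem_span_singleton_self t))
  · exact (Submodule.projection_apply_eq_zero_iff hU).2 hw

theorem exists_eq_add_mul_of_mem_adjoin_insert {R A : Type*} [CommSemiring R] [CommSemiring A]
    [Algebra R A] {s : Set A} {t x f : A} (ht : t ∈ Algebra.adjoin R s) (hx : x * x = t * x)
    (hf : f ∈ Algebra.adjoin R (insert x s)) :
    ∃ a ∈ Algebra.adjoin R s, ∃ b ∈ Algebra.adjoin R s, f = a + b * x := by
  induction hf using Algebra.adjoin_induction with
  | mem y hy =>
    obtain rfl | hy := hy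
    · exact ⟨0, zero_mem _, 1, one_mem _, by rw [zero_add, one_mul]⟩
    · exact ⟨y, Algebra.subset_adjoin hy, 0, zero_mem _, by rw [zero_mul, add_zero]⟩
  | algebraMap r =>
    exact ⟨algebraMap R A r, algebraMap_mem _ r, 0, zero_mem _, by rw [zero_mul, add_zero]⟩
  | add f g _ _ hf hg =>
    obtain ⟨a, ha, b, hb, rfl⟩ := hf
    obtain ⟨a', ha', b', hb', rfl⟩ := hg
    exact ⟨a + a', add_mem ha ha', b + b', add_mem hb hb', by ring⟩
  | mul f g _ _ hf hg =>
    obtain ⟨a, ha, b, hb, rfl⟩ := hf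
    obtain ⟨a', ha', b', hb', rfl⟩ := hg
    refine ⟨a * a', mul_mem ha ha', a * b' + b * a' + b * b' * t,
      add_mem (add_mem (mul_mem ha hb') (mul_mem hb ha')) (mul_mem (mul_mem hb hb') ht), ?_⟩
    calc (a + b * x) * (a' + b' * x) = a * a' + (a * b' + b * a') * x + b * b' * (x * x) := by ring
      _ = a * a' + (a * b' + b * a' + b * b' * t) * x := by rw [hx]; ring

theorem mem_colonIdeal {A : Type*} [Ring A] {I : Ideal A} {x h : A} :
    h ∈ colonIdeal I x ↔ h * x ∈ I :=
  Iff.rfl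

namespace SPH

variable {d : ℕ} [NeZero d]

theorem gen_mem_H1 (i : Fin d) : gen d i ∈ H1 d :=
  Submodule.subset_span ⟨i, rfl⟩

theorem gen_mul_self (i : Fin d) : gen d i * gen d i = gen d 0 * gen d i := by
  obtain rfl | hi := eq_or_ne i 0
  · rfl
  · have h : Ideal.Quotient.mk (spRel d) (X i ^ 2) = Ideal.Quotient.mk (spRel d) (X 0 * X i) :=
      Ideal.Quotient.eq.2 (Ideal.subset_span ⟨i, hi, rfl⟩)
    rwa [pow_two, map_mul, map_mul] at h

theorem mul_self_of_mem_H1 {x : SPH d} (hx : x ∈ H1 d) : x * x = gen d 0 * x :=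
  mul_self_eq_mul_of_mem_span (Set.forall_mem_range.2 gen_mul_self) hx

section Lift

variable {R : Type*} [CommRing R] [Algebra (ZMod 2) R]

/-- The universal property of `H`: the algebra homomorphism `H → R` sending the generators to a
family `a` that satisfies the defining relations. -/
noncomputable def lift (a : Fin d → R) (ha : ∀ i, a i * a i = a 0 * a i) :
    SPH d →ₐ[ZMod 2] R :=
  Ideal.Quotient.liftₐ (spRel d) (aeval a) <| by
    have hle : spRel d ≤ RingHom.ker (aeval a : MvPolynomial (Fin d) (ZMod 2) →ₐ[ZMod 2] R) := by
      refine Ideal.span_le.2 ?_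
      rintro _ ⟨i, -, rfl⟩
      simp only [SetLike.mem_coe, RingHom.mem_ker, map_sub, map_mul, aeval_X, pow_two, ha,
        sub_self]
    exact fun p hp ↦ hle hp

theorem lift_gen (a : Fin d → R) (ha : ∀ i, a i * a i = a 0 * a i) (i : Fin d) :
    lift a ha (gen d i) = a i :=
  aeval_X a i

theorem algHom_ext {f g : SPH d →ₐ[ZMod 2] R} (h : ∀ i, f (gen d i) = g (gen d i)) : f = g :=
  Ideal.Quotient.algHom_ext _ (MvPolynomial.algHom_ext h)

theorem algHom_sub_mem {I : Ideal R} {f g : SPH d →ₐ[ZMod 2] R}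
    (h : ∀ i, f (gen d i) - g (gen d i) ∈ I) (x : SPH d) : f x - g x ∈ I := by
  have hmk : (Ideal.Quotient.mkₐ (ZMod 2) I).comp f = (Ideal.Quotient.mkₐ (ZMod 2) I).comp g :=
    algHom_ext fun i ↦ Ideal.Quotient.eq.2 (h i)
  exact Ideal.Quotient.eq.1 (DFunLike.congr_fun hmk x)

end Lift

section DividedDifference

open QuadraticAlgebra

variable (c : Fin d → ZMod 2) (hc : c 0 = 0)

/-- The substitution `α_i ↦ α_i + c_i ω` from `H` to `H[ω]/(ω² - t ω)`; the condition `c 0 = 0`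
says that it fixes `t`. -/
noncomputable def shift : SPH d →ₐ[ZMod 2] QuadraticAlgebra (SPH d) 0 (gen d 0) :=
  lift (fun i ↦ algebraMap _ _ (gen d i) + c i • ω) fun i ↦ by
    rw [hc, zero_smul, add_zero]
    refine mul_self_eq_mul_of_mem_span (s := {algebraMap _ _ (gen d i), ω}) ?_ <|
      add_mem (Submodule.subset_span (Set.mem_insert _ _)) <|
        Submodule.smul_mem _ _ (Submodule.subset_span (Set.mem_insert_of_mem _ rfl))
    rintro y (rfl | rfl)
    · rw [← map_mul, ← map_mul, gen_mul_self]
    · rw [omega_mul_omega_eq_algebraMap, map_zero, zero_add]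

theorem shift_gen (i : Fin d) :
    shift c hc (gen d i) = algebraMap _ _ (gen d i) + c i • ω :=
  lift_gen _ _ i

/-- The divided difference `D` along `c`, defined by the expansion `shift c f = f + D f ω`. -/
noncomputable def divDiff : SPH d →ₗ[ZMod 2] SPH d :=
  (imₗ 0 (gen d 0)).restrictScalars (ZMod 2) ∘ₗ (shift c hc).toLinearMap

theorem im_shift (f : SPH d) : (shift c hc f).im = divDiff c hc f :=
  rfl

theorem re_shift (f : SPH d) : (shift c hc f).re = f := by
  let ε : QuadraticAlgebra (SPH d) 0 (gen d 0) →ₐ[SPH d] SPH d :=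
    QuadraticAlgebra.lift ⟨0, by simp⟩
  have hε (z) : ε z = z.re := by simp [ε]
  have hid : (ε.restrictScalars (ZMod 2)).comp (shift c hc) = AlgHom.id (ZMod 2) (SPH d) :=
    algHom_ext fun i ↦ by simp [shift_gen, hε]
  simpa only [AlgHom.comp_apply, AlgHom.restrictScalars_apply, hε, AlgHom.id_apply] using
    DFunLike.congr_fun hid f

theorem divDiff_gen (i : Fin d) : divDiff c hc (gen d i) = algebraMap (ZMod 2) _ (c i) := by
  simp [← im_shift, shift_gen, Algebra.algebraMap_eq_smul_one]

theorem divDiff_mul (f g : SPH d) :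
    divDiff c hc (f * g) =
      divDiff c hc f * g + f * divDiff c hc g + gen d 0 * divDiff c hc f * divDiff c hc g := by
  simp only [← im_shift, map_mul, im_mul, re_shift]
  ring

theorem divDiff_eq_zero_of_mem_adjoin {s : Set (SPH d)} (hs : ∀ y ∈ s, divDiff c hc y = 0)
    {f : SPH d} (hf : f ∈ Algebra.adjoin (ZMod 2) s) : divDiff c hc f = 0 := by
  induction hf using Algebra.adjoin_induction with
  | mem y hy => exact hs y hy
  | algebraMap r =>
    rw [← im_shift, AlgHom.commutes, IsScalarTower.algebraMap_apply _ (SPH d), algebraMap_im]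
  | add f g _ _ hf hg => rw [map_add, hf, hg, add_zero]
  | mul f g _ _ hf hg => simp only [divDiff_mul, hf, hg, zero_mul, mul_zero, add_zero]

theorem divDiff_mem_span {s : Set (SPH d)} (hs : ∀ y ∈ s, divDiff c hc y = 0) {f : SPH d}
    (hf : f ∈ Ideal.span s) : divDiff c hc f ∈ Ideal.span s := by
  induction hf using Submodule.span_induction with
  | mem y hy => exact hs y hy ▸ zero_mem _
  | zero => exact (map_zero (divDiff c hc)).symm ▸ zero_mem _
  | add f g _ _ hf hg => exact (map_add (divDiff c hc) f g).symm ▸ add_mem hf hg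
  | smul a f hf hDf =>
    rw [smul_eq_mul, divDiff_mul]
    exact add_mem (add_mem (Ideal.mul_mem_left _ _ hf) (Ideal.mul_mem_left _ _ hDf))
      (Ideal.mul_mem_left _ _ hDf)

theorem divDiff_eq_of_mem_H1 (φ : SPH d →ₗ[ZMod 2] ZMod 2) (hφ : φ (gen d 0) = 0) {y : SPH d}
    (hy : y ∈ H1 d) : divDiff (φ ∘ gen d) hφ y = algebraMap (ZMod 2) _ (φ y) :=
  LinearMap.eqOn_span (f := divDiff (φ ∘ gen d) hφ) (g := Algebra.linearMap _ _ ∘ₗ φ)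
    (Set.forall_mem_range.2 (divDiff_gen _ hφ)) hy

end DividedDifference

theorem eq_zero_of_mem_adjoin_gen_zero {f : SPH d}
    (hf : f ∈ Algebra.adjoin (ZMod 2) {gen d 0}) (hft : f * gen d 0 = 0) : f = 0 := by
  rw [Algebra.adjoin_singleton_eq_range_aeval] at hf
  obtain ⟨p, rfl⟩ := hf
  let ε : SPH d →ₐ[ZMod 2] Polynomial (ZMod 2) :=
    lift (Pi.single 0 Polynomial.X) fun i ↦ by
      obtain rfl | hi := eq_or_ne i 0
      · rfl
      · rw [Pi.single_eq_of_ne hi, mul_zero, mul_zero]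
  have hε : ε (gen d 0) = Polynomial.X := (lift_gen _ _ 0).trans (Pi.single_eq_same _ _)
  have hp : p * Polynomial.X = 0 := by
    simpa [← Polynomial.aeval_algHom_apply, hε] using congrArg ε hft
  rw [(mul_eq_zero.1 hp).resolve_right Polynomial.X_ne_zero, map_zero]

theorem eq_zero_of_mem_adjoin_of_mul_gen_zero {s : Finset (Fin d)} (hs : 0 ∉ s) {f : SPH d}
    (hf : f ∈ Algebra.adjoin (ZMod 2) (gen d '' insert 0 (s : Set (Fin d))))
    (hft : f * gen d 0 = 0) : f = 0 := by
  induction s using Finset.induction_on generalizing f with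
  | empty =>
    rw [Finset.coe_empty, insert_empty_eq, Set.image_singleton] at hf
    exact eq_zero_of_mem_adjoin_gen_zero hf hft
  | insert j s hj ih =>
    rw [Finset.mem_insert, not_or] at hs
    rw [Finset.coe_insert, Set.insert_comm, Set.image_insert_eq] at hf
    obtain ⟨a, ha, b, hb, rfl⟩ := exists_eq_add_mul_of_mem_adjoin_insert
      (Algebra.subset_adjoin (Set.mem_image_of_mem _ (Set.mem_insert 0 _))) (gen_mul_self j) hf
    have hD : ∀ y ∈ gen d '' insert 0 (s : Set (Fin d)),
        divDiff (Pi.single j 1) (Pi.single_eq_of_ne hs.1 1) y = 0 := by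
      rintro _ ⟨i, hi, rfl⟩
      have hij : i ≠ j := by
        rintro rfl
        exact hi.elim (Ne.symm hs.1) hj
      rw [divDiff_gen, Pi.single_eq_of_ne hij, map_zero]
    have hDt := hD _ (Set.mem_image_of_mem _ (Set.mem_insert 0 _))
    have hbt : b * gen d 0 = 0 := by
      simpa [divDiff_mul, divDiff_gen, hDt, divDiff_eq_zero_of_mem_adjoin _ _ hD ha,
        divDiff_eq_zero_of_mem_adjoin _ _ hD hb] using
        congrArg (divDiff (Pi.single j 1) (Pi.single_eq_of_ne hs.1 1)) hft
    obtain rfl : b = 0 := ih hs.2 hb hbt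
    rw [zero_mul, add_zero] at hft ⊢
    exact ih hs.2 ha hft

theorem adjoin_range_gen : Algebra.adjoin (ZMod 2) (Set.range (gen d)) = ⊤ := by
  have hrange : Set.range (gen d) = Ideal.Quotient.mkₐ (ZMod 2) (spRel d) '' Set.range X :=
    Set.range_comp _ _
  rw [hrange, ← AlgHom.map_adjoin, MvPolynomial.adjoin_range_X, Algebra.map_top]
  exact AlgHom.range_eq_top _ |>.2 (Ideal.Quotient.mkₐ_surjective (ZMod 2) (spRel d))

theorem eq_zero_of_mul_gen_zero {f : SPH d} (hft : f * gen d 0 = 0) : f = 0 := by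
  classical
  refine eq_zero_of_mem_adjoin_of_mul_gen_zero (Finset.notMem_erase 0 Finset.univ) ?_ hft
  rw [← Finset.coe_insert, Finset.insert_erase (Finset.mem_univ 0), Finset.coe_univ,
    Set.image_univ, adjoin_range_gen]
  exact Algebra.mem_top

section ColonIdeal

variable {S : Set (SPH d)}

theorem exists_algHom_sub_mem_span (hS : S ⊆ H1 d)
    (ht : gen d 0 ∉ Submodule.span (ZMod 2) S) :
    ∃ P : SPH d →ₐ[ZMod 2] SPH d,
      P (gen d 0) = gen d 0 ∧ (∀ s ∈ S, P s = 0) ∧ ∀ h, h - P h ∈ Ideal.span S := by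
  obtain ⟨π, hπt, hπS, hπ⟩ := exists_linearMap_sub_mem_of_notMem ht
  have hπH1 (i : Fin d) : π (gen d i) ∈ H1 d := by
    have := sub_mem (gen_mem_H1 i) (Submodule.span_le.2 hS (hπ (gen d i)))
    rwa [sub_sub_cancel] at this
  let P : SPH d →ₐ[ZMod 2] SPH d :=
    lift (fun i ↦ π (gen d i)) fun i ↦ by rw [hπt, mul_self_of_mem_H1 (hπH1 i)]
  have hPgen (i : Fin d) : P (gen d i) = π (gen d i) := lift_gen _ _ i
  have hPH1 : Set.EqOn P.toLinearMap π (H1 d) :=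
    LinearMap.eqOn_span (Set.forall_mem_range.2 hPgen)
  have hPsub (i : Fin d) : gen d i - P (gen d i) ∈ Ideal.span S := by
    rw [hPgen]
    exact Submodule.span_subset_span (ZMod 2) (SPH d) S (hπ (gen d i))
  exact ⟨P, (hPgen 0).trans hπt,
    fun s hs ↦ (hPH1 (hS hs)).trans (hπS s (Submodule.subset_span hs)),
    algHom_sub_mem (f := AlgHom.id _ _) hPsub⟩

theorem mem_span_of_mul_gen_zero_mem (hS : S ⊆ H1 d)
    (ht : gen d 0 ∉ Submodule.span (ZMod 2) S) {h : SPH d} (hh : h * gen d 0 ∈ Ideal.span S) :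
    h ∈ Ideal.span S := by
  obtain ⟨P, hPt, hPS, hP⟩ := exists_algHom_sub_mem_span hS ht
  have hle : Ideal.span S ≤ RingHom.ker P := Ideal.span_le.2 hPS
  have hPh : P h * gen d 0 = 0 := by rw [← hPt, ← map_mul]; exact hle hh
  simpa only [eq_zero_of_mul_gen_zero hPh, sub_zero] using hP h

theorem exists_add_mul_mem_span (hS : S ⊆ H1 d) {x : SPH d} (hx : x ∈ H1 d)
    (hxS : x ∉ Submodule.span (ZMod 2) (insert (gen d 0) S)) {h : SPH d}
    (hh : h * x ∈ Ideal.span S) : ∃ b, h + b * (x + gen d 0) ∈ Ideal.span S := by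
  obtain ⟨φ, hφx, hφ⟩ := Submodule.exists_le_ker_of_notMem hxS
  have hφ0 : ∀ y ∈ insert (gen d 0) S, φ y = 0 := fun y hy ↦ hφ (Submodule.subset_span hy)
  have hφt : φ (gen d 0) = 0 := hφ0 _ (Set.mem_insert _ _)
  have hDS : ∀ y ∈ S, divDiff (φ ∘ gen d) hφt y = 0 := fun y hy ↦ by
    rw [divDiff_eq_of_mem_H1 φ hφt (hS hy), hφ0 y (Set.mem_insert_of_mem _ hy), map_zero]
  have hφx1 : φ x = 1 := Fin.eq_one_of_ne_zero _ hφx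
  have hDx : divDiff (φ ∘ gen d) hφt x = 1 := by
    rw [divDiff_eq_of_mem_H1 φ hφt hx, hφx1, map_one]
  refine ⟨divDiff (φ ∘ gen d) hφt h, ?_⟩
  convert divDiff_mem_span _ _ hDS hh using 1
  rw [divDiff_mul, hDx]
  ring

theorem colonIdeal_span (hS : S ⊆ H1 d) {x : SPH d} (hx : x ∈ H1 d)
    (hxS : x ∉ Submodule.span (ZMod 2) S) :
    colonIdeal (Ideal.span S) x = Ideal.span (insert (x + gen d 0) S) := by
  refine le_antisymm (fun h hh ↦ ?_) (Ideal.span_le.2 ?_)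
  · rw [mem_colonIdeal] at hh
    rw [Ideal.mem_span_insert']
    by_cases hxt : x ∈ Submodule.span (ZMod 2) (insert (gen d 0) S)
    · have hadd : x + gen d 0 ∈ Submodule.span (ZMod 2) S :=
        (mem_or_add_mem_of_mem_span_insert hxt).resolve_left hxS
      have ht : gen d 0 ∉ Submodule.span (ZMod 2) S := fun ht ↦
        hxS ((add_mem_cancel_right ht).1 hadd)
      have hht : h * gen d 0 ∈ Ideal.span S := by
        have := Ideal.mul_mem_left _ h (Submodule.span_subset_span (ZMod 2) (SPH d) S hadd)
        rwa [mul_add, Ideal.add_mem_iff_right _ hh] at this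
      exact ⟨0, by simpa only [zero_mul, add_zero] using mem_span_of_mul_gen_zero_mem hS ht hht⟩
    · exact exists_add_mul_mem_span hS hx hxt hh
  · rintro y (rfl | hy)
    · have hzero : (x + gen d 0) * x = 0 := by
        rw [add_mul, mul_self_of_mem_H1 hx, ZModModule.add_self]
      exact mem_colonIdeal.2 (hzero ▸ zero_mem _)
    · exact mem_colonIdeal.2 (Ideal.mul_mem_right _ _ (Ideal.subset_span hy))

end ColonIdeal

end SPH

/-- For `d ≥ 2`, the algebra `H = F₂[T, X₂, …, X_d]/(X_i² − T·X_i)`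
is universally Koszul: for every ideal `I` generated by a subset of `H_1` and every
`x ∈ H_1 \ I`, the colon ideal `I : x` is again generated by a subset of `H_1`. -/
theorem stmt12 (d : ℕ) [NeZero d] (hd : 2 ≤ d) :
    ∀ I : Ideal (SPH d), (∃ S ⊆ ((H1 d : Submodule (ZMod 2) (SPH d)) : Set (SPH d)),
        I = Ideal.span S) →
      ∀ x ∈ H1 d, x ∉ I →
        ∃ S' ⊆ ((H1 d : Submodule (ZMod 2) (SPH d)) : Set (SPH d)),
          colonIdeal I x = Ideal.span S' := by
  rintro _ ⟨S, hS, rfl⟩ x hx hxI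
  have hxS : x ∉ Submodule.span (ZMod 2) S := fun h ↦
    hxI (Submodule.span_subset_span (ZMod 2) (SPH d) S h)
  exact ⟨insert (x + gen d 0) S, Set.insert_subset (add_mem hx (SPH.gen_mem_H1 0)) hS,
    SPH.colonIdeal_span hS hx hxS⟩
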